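/- A canonical admissible 6-tuple f=(h₀,h₁,h₂;q₀,q₁,q₂) is minimal if and only if q₂<h₀, or q₂>h₁+h₂−h₀, or (h₀=h₁ and h₀<q₂<h₂). -/

import Mathlib

/-!
Common setup: 6-tuples, the coloured graph Γ(f), conditions (I)–(VI),
the maps ψ₁, ψ₂, ψ₃, σ, equivalences, traps, canonical/minimal/root tuples.
-/

namespace GMN

/-- A 6-tuple `(h₀,h₁,h₂;q₀,q₁,q₂)` of integers. -/
structure Tuple where
  h0 : ℤ
  h1 : ℤ
  h2 : ℤ
  q0 : ℤ
  q1 : ℤ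
  q2 : ℤ

namespace Tuple

/-- The `h`-components indexed by `ℤ₃`. -/
def h (f : Tuple) : ZMod 3 → ℤ := fun i => if i = 0 then f.h0 else if i = 1 then f.h1 else f.h2

/-- The `q`-components indexed by `ℤ₃`. -/
def q (f : Tuple) : ZMod 3 → ℤ := fun i => if i = 0 then f.q0 else if i = 1 then f.q1 else f.q2

/-- `2lᵢ = h_{i-1} + hᵢ`. -/
def twol (f : Tuple) (i : ZMod 3) : ℤ := f.h (i - 1) + f.h i

end Tuple

/-- Condition (I): all `hᵢ` positive. -/
def CondI (f : Tuple) : Prop := ∀ i, 0 < f.h i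

/-- Condition (II): all `hᵢ` of the same parity. -/
def CondII (f : Tuple) : Prop := ∀ i j, f.h i % 2 = f.h j % 2

/-- Condition (III): `0 ≤ qᵢ < 2lᵢ`. -/
def CondIII (f : Tuple) : Prop := ∀ i, 0 ≤ f.q i ∧ f.q i < f.twol i

/-- Condition (IV): all `qᵢ` of the same parity. -/
def CondIV (f : Tuple) : Prop := ∀ i j, f.q i % 2 = f.q j % 2

/-- Conditions (I)–(IV) together. -/
def CondsI_IV (f : Tuple) : Prop := CondI f ∧ CondII f ∧ CondIII f ∧ CondIV f

/-- Condition (V): `hᵢ + qᵢ` odd. -/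
def CondV (f : Tuple) : Prop := ∀ i, (f.h i + f.q i) % 2 = 1

/-- The vertex set `V(f) = ⋃ᵢ {i} × ℤ_{2lᵢ}`, with second coordinates as least
nonnegative residues. -/
def Vtx (f : Tuple) : Set (ZMod 3 × ℤ) := {p | 0 ≤ p.2 ∧ p.2 < f.twol p.1}

/-- `ι₀(i,j) = (i, j + (−1)^j)`, second coordinate mod `2lᵢ`. -/
def iota0 (f : Tuple) (p : ZMod 3 × ℤ) : ZMod 3 × ℤ :=
  (p.1, (if p.2 % 2 = 0 then p.2 + 1 else p.2 - 1) % f.twol p.1)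

/-- `ι₁(i,j) = (i, j − (−1)^j)`, second coordinate mod `2lᵢ`. -/
def iota1 (f : Tuple) (p : ZMod 3 × ℤ) : ZMod 3 × ℤ :=
  (p.1, (if p.2 % 2 = 0 then p.2 - 1 else p.2 + 1) % f.twol p.1)

/-- `ι₂(i,j) = (i+1, −j−1)` if `0 ≤ j ≤ hᵢ−1`, and `(i−1, 2lᵢ−j−1)` if `hᵢ ≤ j ≤ 2lᵢ−1`. -/
def iota2 (f : Tuple) (p : ZMod 3 × ℤ) : ZMod 3 × ℤ :=
  if p.2 < f.h p.1 then (p.1 + 1, (-p.2 - 1) % f.twol (p.1 + 1))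
  else (p.1 - 1, (f.twol p.1 - p.2 - 1) % f.twol (p.1 - 1))

/-- `ρ(i,j) = (i, j + qᵢ)`. -/
def rho (f : Tuple) (p : ZMod 3 × ℤ) : ZMod 3 × ℤ :=
  (p.1, (p.2 + f.q p.1) % f.twol p.1)

/-- `ρ⁻¹(i,j) = (i, j − qᵢ)`. -/
def rhoInv (f : Tuple) (p : ZMod 3 × ℤ) : ZMod 3 × ℤ :=
  (p.1, (p.2 - f.q p.1) % f.twol p.1)

/-- `ι₃ = ρ ∘ ι₂ ∘ ρ⁻¹`. -/
def iota3 (f : Tuple) : ZMod 3 × ℤ → ZMod 3 × ℤ :=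
  rho f ∘ iota2 f ∘ rhoInv f

/-- The four involutions of `Γ(f)`, indexed by the colour `c ∈ {0,1,2,3}`. -/
def iota (f : Tuple) : Fin 4 → ZMod 3 × ℤ → ZMod 3 × ℤ
  | 0 => iota0 f
  | 1 => iota1 f
  | 2 => iota2 f
  | 3 => iota3 f

/-- One step along an edge of `Γ(f)` whose colour lies in `S`, within `V(f)`. -/
def Step (f : Tuple) (S : Set (Fin 4)) (a b : ZMod 3 × ℤ) : Prop :=
  a ∈ Vtx f ∧ b ∈ Vtx f ∧ ∃ c ∈ S, b = iota f c a

/-- The orbit relation on `V(f)` of the subgroup generated by the involutions with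
colours in `S` (the `S`-residue relation). -/
def OrbRel (f : Tuple) (S : Set (Fin 4)) : ZMod 3 × ℤ → ZMod 3 × ℤ → Prop :=
  Relation.EqvGen (Step f S)

/-- The subgroup generated by the colours in `S` has exactly three orbits on `V(f)`. -/
def ThreeOrbits (f : Tuple) (S : Set (Fin 4)) : Prop :=
  ∃ a b c, a ∈ Vtx f ∧ b ∈ Vtx f ∧ c ∈ Vtx f ∧
    ¬ OrbRel f S a b ∧ ¬ OrbRel f S a c ∧ ¬ OrbRel f S b c ∧
    ∀ v ∈ Vtx f, OrbRel f S a v ∨ OrbRel f S b v ∨ OrbRel f S c v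

/-- Admissibility: conditions (I)–(IV), (V), and (VI) (three `{2,3}`-residues). -/
def Admissible (f : Tuple) : Prop :=
  CondsI_IV f ∧ CondV f ∧ ThreeOrbits f {2, 3}

/-- `ψ₁(h₀,h₁,h₂;q₀,q₁,q₂) = (h₁,h₂,h₀;q₁,q₂,q₀)`. -/
def psi1 (f : Tuple) : Tuple := ⟨f.h1, f.h2, f.h0, f.q1, f.q2, f.q0⟩

/-- `ψ₂(h₀,h₁,h₂;q₀,q₁,q₂) = (h₂,h₁,h₀;q₀,q₂,q₁)`. -/
def psi2 (f : Tuple) : Tuple := ⟨f.h2, f.h1, f.h0, f.q0, f.q2, f.q1⟩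

/-- `ψ₃(h₀,h₁,h₂;q₀,q₁,q₂) = (h₀,h₁,h₂;−q₀,−q₁,−q₂)`, the `q`-entries reduced to their
least nonnegative residues mod the respective `2lᵢ`. -/
def psi3 (f : Tuple) : Tuple :=
  ⟨f.h0, f.h1, f.h2,
    (-f.q0) % (f.h2 + f.h0), (-f.q1) % (f.h0 + f.h1), (-f.q2) % (f.h1 + f.h2)⟩

/-- The 2-symmetric transformation `σ`, with the `q′`-entries reduced to their least
nonnegative residues mod the respective `2lᵢ′ = h′_{i−1} + h′ᵢ`. -/
def sigma (f : Tuple) : Tuple :=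
  if f.q0 = 0 then f
  else if f.q0 < f.h0 ∧ f.q0 < f.h2 then
    ⟨f.h0 + f.h1 - f.q0, f.q0, f.h2 + f.h1 - f.q0,
      (f.h0 + f.h1 + f.h2 - 2 * f.q0) % ((f.h2 + f.h1 - f.q0) + (f.h0 + f.h1 - f.q0)),
      (f.q0 + f.q1 + f.h1) % ((f.h0 + f.h1 - f.q0) + f.q0),
      (f.q0 + f.q2 + f.h1) % (f.q0 + (f.h2 + f.h1 - f.q0))⟩
  else if f.h0 < f.q0 ∧ f.h2 < f.q0 then
    ⟨f.q0 + f.h1 - f.h2, f.h0 + f.h2 - f.q0, f.q0 + f.h1 - f.h0,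
      f.h1 % ((f.q0 + f.h1 - f.h0) + (f.q0 + f.h1 - f.h2)),
      (f.q0 + f.q1 - f.h2) % ((f.q0 + f.h1 - f.h2) + (f.h0 + f.h2 - f.q0)),
      (f.q0 + f.q2 - f.h0) % ((f.h0 + f.h2 - f.q0) + (f.q0 + f.h1 - f.h0))⟩
  else if f.q0 < f.h2 then
    ⟨f.h1, f.h0, f.h1 + f.h2 - f.h0,
      (f.h1 + f.h2 - f.q0) % ((f.h1 + f.h2 - f.h0) + f.h1),
      f.q1 % (f.h1 + f.h0),
      (2 * f.q0 + f.q2 + f.h1 - f.h0) % (f.h0 + (f.h1 + f.h2 - f.h0))⟩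
  else
    ⟨f.h1 + f.h0 - f.h2, f.h2, f.h1,
      (f.h1 + f.h0 - f.q0) % (f.h1 + (f.h1 + f.h0 - f.h2)),
      (2 * f.q0 + f.q1 + f.h1 - f.h2) % ((f.h1 + f.h0 - f.h2) + f.h2),
      f.q2 % (f.h2 + f.h1)⟩

/-- The complexity `ν(f) = h₀ + h₁ + h₂`. -/
def nu (f : Tuple) : ℤ := f.h0 + f.h1 + f.h2

/-- `δ(f) = ν(σ(f)) − ν(f)`. -/
def delta (f : Tuple) : ℤ := nu (sigma f) - nu f

/-- One step of the action of a generator of `H` on admissible 6-tuples. -/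
def HStep (a b : Tuple) : Prop :=
  Admissible a ∧ Admissible b ∧ (b = psi1 a ∨ b = psi2 a ∨ b = psi3 a)

/-- `H`-equivalence: the orbit relation of `H = ⟨ψ₁,ψ₂,ψ₃⟩` on `ℱ`. -/
def HEquiv : Tuple → Tuple → Prop := Relation.EqvGen HStep

/-- One step of the action of a generator of `H′` on admissible 6-tuples. -/
def H'Step (a b : Tuple) : Prop :=
  Admissible a ∧ Admissible b ∧ (b = psi2 a ∨ b = psi3 a)

/-- `H′`-equivalence: the orbit relation of `H′ = ⟨ψ₂,ψ₃⟩` on `ℱ`. -/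
def H'Equiv : Tuple → Tuple → Prop := Relation.EqvGen H'Step

/-- One step of the action of a generator of `G` on admissible 6-tuples. -/
def GStep (a b : Tuple) : Prop :=
  Admissible a ∧ Admissible b ∧ (b = psi1 a ∨ b = psi2 a ∨ b = psi3 a ∨ b = sigma a)

/-- `G`-equivalence: the orbit relation of `G = ⟨ψ₁,ψ₂,ψ₃,σ⟩` on `ℱ`. -/
def GEquiv : Tuple → Tuple → Prop := Relation.EqvGen GStep

/-- Membership in the set `{0, r+1, r+2, …, s−1}`. -/
def inT (r s x : ℤ) : Prop := x = 0 ∨ (r < x ∧ x < s)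

/-- A trap of type `(r,s)`: `H`-equivalent to an admissible `(r,r,s;q₀,0,q₂)` with
`q₀+k(q₀+q₂), q₂+k(q₀+q₂) ∈ {0,r+1,…,s−1} (mod r+s)` for all `k ≥ 0`. -/
def IsTrapOfType (r s : ℤ) (f : Tuple) : Prop :=
  ∃ g : Tuple, Admissible g ∧ HEquiv f g ∧
    g.h0 = r ∧ g.h1 = r ∧ g.h2 = s ∧ g.q1 = 0 ∧
    ∀ k : ℕ, inT r s ((g.q0 + (k : ℤ) * (g.q0 + g.q2)) % (r + s)) ∧
             inT r s ((g.q2 + (k : ℤ) * (g.q0 + g.q2)) % (r + s))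

/-- A trap: a trap of some type `(r,s)` with `0 < r ≤ s`. -/
def IsTrap (f : Tuple) : Prop := ∃ r s : ℤ, 0 < r ∧ r ≤ s ∧ IsTrapOfType r s f

/-- The canonical representative conditions (a)–(i) (together with admissibility). -/
def Canonical (f : Tuple) : Prop :=
  Admissible f ∧
  (f.h0 ≤ f.h1 ∧ f.h1 ≤ f.h2) ∧
  (2 * f.q0 ≤ f.h2 + f.h0) ∧
  ((f.q0 = 0 ∨ 2 * f.q0 = f.h2 + f.h0) → 2 * f.q1 ≤ f.h0 + f.h1) ∧
  ((f.q0 = 0 ∨ 2 * f.q0 = f.h2 + f.h0) → (f.q1 = 0 ∨ 2 * f.q1 = f.h0 + f.h1) →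
    2 * f.q2 ≤ f.h1 + f.h2) ∧
  (f.h0 = f.h1 → f.q0 ≤ f.q2 ∧ f.q2 ≤ (-f.q0) % (f.h2 + f.h0)) ∧
  (f.h0 = f.h1 → (f.q2 = f.q0 ∨ f.q2 = (-f.q0) % (f.h2 + f.h0)) → f.q1 ≤ f.h1) ∧
  (f.h1 = f.h2 → f.q0 ≤ f.q1 ∧ f.q1 ≤ (-f.q0) % (f.h2 + f.h0)) ∧
  (f.h1 = f.h2 → (f.q1 = f.q0 ∨ f.q1 = (-f.q0) % (f.h2 + f.h0)) → f.q2 ≤ f.h2) ∧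
  (f.h0 = f.h1 ∧ f.h1 = f.h2 → f.q1 ≤ f.q2)

/-- A canonical 6-tuple is minimal if its complexity is minimal in its `G`-orbit. -/
def Minimal (f : Tuple) : Prop :=
  Canonical f ∧ ∀ g, GEquiv f g → nu f ≤ nu g

/-- A canonical 6-tuple is a root if every `G`-equivalent but not `H`-equivalent
6-tuple has strictly larger complexity. -/
def Root (f : Tuple) : Prop :=
  Canonical f ∧ ∀ g, GEquiv f g → ¬ HEquiv f g → nu f < nu g

/-- A colour-preserving isomorphism between `Γ(f)` and `Γ(f′)`. -/
def CPIso (f f' : Tuple) : Prop :=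
  ∃ φ : ZMod 3 × ℤ → ZMod 3 × ℤ, Set.BijOn φ (Vtx f) (Vtx f') ∧
    ∀ c : Fin 4, ∀ v ∈ Vtx f, φ (iota f c v) = iota f' c (φ v)

/-- The set of admissible 6-tuples, as a type. -/
abbrev AdmTuple := {f : Tuple // Admissible f}

/-!
Only `σ` changes the complexity, by `h₁ - min(h₀, h₂, q₀, h₀ + h₂ - q₀)` when `q₀ ≠ 0`. So `σ` can
lower the complexity of a rotation of `f` only if that rotation puts the strict minimum of the `hᵢ`
in the middle: at most one rotation descends. If `σ` keeps the complexity without fixing `f`, then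
on both sides the middle `h` is a minimum of the `hᵢ`, and both tuples are local minima. Hence the
complexity of the local minimum reached by descending is an invariant of the `G`-orbit, and local
minima are global. For `h₀ ≤ h₁ ≤ h₂` only the rotation putting `h₀` in the middle can descend,
which makes minimality a condition on `q₂`.

That a descending `σ` stays inside `ℱ` is seen by counting two-valued functions constant on the
`{2,3}`-residues: there are `2 ^ n` of them for `n` residues. Such a function is determined by its
values on the circles `1` and `2`; after circle `0` is eliminated, the conditions on these values
form six families of arcs, which `σ` permutes.
-/

/-! ### Reduction of the `q`-entries -/

namespace Tuple

/-- The tuple with each `qᵢ` replaced by its least nonnegative residue mod `2lᵢ`. It separates the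
linear part of `ψ₃` and `σ` from the final reduction. -/
def reduce (f : Tuple) : Tuple :=
  ⟨f.h0, f.h1, f.h2, f.q0 % (f.h2 + f.h0), f.q1 % (f.h0 + f.h1), f.q2 % (f.h1 + f.h2)⟩

theorem reduce_eq_reduce {f g : Tuple} (h0 : f.h0 = g.h0) (h1 : f.h1 = g.h1) (h2 : f.h2 = g.h2)
    (q0 : f.q0 ≡ g.q0 [ZMOD g.h2 + g.h0]) (q1 : f.q1 ≡ g.q1 [ZMOD g.h0 + g.h1])
    (q2 : f.q2 ≡ g.q2 [ZMOD g.h1 + g.h2]) : f.reduce = g.reduce := by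
  simp only [reduce, h0, h1, h2, q0.eq, q1.eq, q2.eq]

theorem reduce_of_lt {f : Tuple} (q0 : 0 ≤ f.q0) (q0' : f.q0 < f.h2 + f.h0) (q1 : 0 ≤ f.q1)
    (q1' : f.q1 < f.h0 + f.h1) (q2 : 0 ≤ f.q2) (q2' : f.q2 < f.h1 + f.h2) : f.reduce = f := by
  simp only [reduce, Int.emod_eq_of_lt, *]

end Tuple

theorem modEq_of_eq_add_mul {a b n : ℤ} (k : ℤ) (h : a = b + n * k) : a ≡ b [ZMOD n] :=
  (Int.modEq_iff_add_fac.2 ⟨k, h⟩).symm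

theorem psi2_reduce (f : Tuple) : psi2 f.reduce = (psi2 f).reduce := by
  simp only [psi2, Tuple.reduce, add_comm]

theorem psi3_reduce (f : Tuple) : psi3 f.reduce = psi3 f := by
  simp only [psi3, Tuple.reduce, ((Int.mod_modEq _ _).neg).eq]

/-- The representative of `ψ₃(f)` with `q₀` already reduced when `0 < q₀ < 2l₀`. -/
def reflectQ (f : Tuple) : Tuple := ⟨f.h0, f.h1, f.h2, f.h2 + f.h0 - f.q0, -f.q1, -f.q2⟩

theorem psi3_eq_reduce (f : Tuple) : psi3 f = (reflectQ f).reduce :=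
  Tuple.reduce_eq_reduce (f := ⟨f.h0, f.h1, f.h2, -f.q0, -f.q1, -f.q2⟩) rfl rfl rfl
    (modEq_of_eq_add_mul (-1) (by dsimp only [reflectQ]; ring)) rfl rfl

/-! ### Conditions (I)–(V) -/

/-- Conditions (I)–(V), written out in coordinates. -/
structure PreAdmissible (f : Tuple) : Prop where
  h0_pos : 0 < f.h0
  h1_pos : 0 < f.h1
  h2_pos : 0 < f.h2
  h1_parity : f.h1 % 2 = f.h0 % 2
  h2_parity : f.h2 % 2 = f.h0 % 2
  q0_parity : (f.h0 + f.q0) % 2 = 1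
  q1_parity : (f.h0 + f.q1) % 2 = 1
  q2_parity : (f.h0 + f.q2) % 2 = 1
  q0_nonneg : 0 ≤ f.q0
  q0_lt : f.q0 < f.h2 + f.h0
  q1_nonneg : 0 ≤ f.q1
  q1_lt : f.q1 < f.h0 + f.h1
  q2_nonneg : 0 ≤ f.q2
  q2_lt : f.q2 < f.h1 + f.h2

theorem forall_zmod_three {P : ZMod 3 → Prop} : (∀ i, P i) ↔ P 0 ∧ P 1 ∧ P 2 :=
  Fin.forall_fin_succ.trans (and_congr_right' (Fin.forall_fin_two))

theorem preAdmissible_iff {f : Tuple} : PreAdmissible f ↔ CondsI_IV f ∧ CondV f := by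
  have h : f.h 0 = f.h0 ∧ f.h 1 = f.h1 ∧ f.h 2 = f.h2 := ⟨rfl, rfl, rfl⟩
  have q : f.q 0 = f.q0 ∧ f.q 1 = f.q1 ∧ f.q 2 = f.q2 := ⟨rfl, rfl, rfl⟩
  have l : f.twol 0 = f.h2 + f.h0 ∧ f.twol 1 = f.h0 + f.h1 ∧ f.twol 2 = f.h1 + f.h2 :=
    ⟨rfl, rfl, rfl⟩
  simp only [CondsI_IV, CondI, CondII, CondIII, CondIV, CondV, forall_zmod_three, h, q, l,
    true_and, and_true]
  constructor
  · rintro ⟨⟩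
    and_intros <;> omega
  · intro
    constructor <;> omega

theorem Admissible.preAdmissible {f : Tuple} (hf : Admissible f) : PreAdmissible f :=
  preAdmissible_iff.2 ⟨hf.1, hf.2.1⟩

theorem preAdmissible_reduce {f : Tuple} (h0 : 0 < f.h0) (h1 : 0 < f.h1) (h2 : 0 < f.h2)
    (h1' : f.h1 % 2 = f.h0 % 2) (h2' : f.h2 % 2 = f.h0 % 2) (q0 : (f.h0 + f.q0) % 2 = 1)
    (q1 : (f.h0 + f.q1) % 2 = 1) (q2 : (f.h0 + f.q2) % 2 = 1) : PreAdmissible f.reduce := by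
  have range {a m : ℤ} (hm : 0 < m) : 0 ≤ a % m ∧ a % m < m :=
    ⟨Int.emod_nonneg a hm.ne', Int.emod_lt_of_pos a hm⟩
  have parity {a m : ℤ} (hm : m % 2 = 0) : (a % m) % 2 = a % 2 :=
    Int.emod_emod_of_dvd a (Int.dvd_of_emod_eq_zero hm)
  have r0 := range (a := f.q0) (add_pos h2 h0)
  have r1 := range (a := f.q1) (add_pos h0 h1)
  have r2 := range (a := f.q2) (add_pos h1 h2)
  have p0 := parity (a := f.q0) (m := f.h2 + f.h0) (by omega)
  have p1 := parity (a := f.q1) (m := f.h0 + f.h1) (by omega)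
  have p2 := parity (a := f.q2) (m := f.h1 + f.h2) (by omega)
  constructor <;> dsimp only [Tuple.reduce] <;> omega

namespace PreAdmissible

variable {f : Tuple}

theorem reduce_eq (hf : PreAdmissible f) : f.reduce = f :=
  Tuple.reduce_of_lt hf.q0_nonneg hf.q0_lt hf.q1_nonneg hf.q1_lt hf.q2_nonneg hf.q2_lt

theorem psi1 (hf : PreAdmissible f) : PreAdmissible (psi1 f) := by
  obtain ⟨⟩ := hf
  constructor <;> dsimp only [GMN.psi1] <;> omega

theorem psi1_iterate (hf : PreAdmissible f) (i : ℕ) : PreAdmissible (GMN.psi1^[i] f) := by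
  induction i generalizing f with
  | zero => exact hf
  | succ _ ih => exact ih hf.psi1

theorem psi2 (hf : PreAdmissible f) : PreAdmissible (psi2 f) := by
  obtain ⟨⟩ := hf
  constructor <;> dsimp only [GMN.psi2] <;> omega

theorem psi3 (hf : PreAdmissible f) : PreAdmissible (psi3 f) := by
  rw [psi3_eq_reduce]
  obtain ⟨⟩ := hf
  apply preAdmissible_reduce <;> dsimp only [reflectQ] <;> omega

end PreAdmissible

theorem psi3_psi3 {f : Tuple} (hf : PreAdmissible f) : psi3 (psi3 f) = f := by
  conv_rhs => rw [← hf.reduce_eq]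
  rw [psi3_eq_reduce f, psi3_reduce, psi3_eq_reduce]
  apply Tuple.reduce_eq_reduce <;> simp [reflectQ]

/-! ### The four linear pieces of `σ` -/

/-- The branch `0 < q₀ < h₀, h₂` of `σ`, before reduction. -/
def sigmaLow (f : Tuple) : Tuple :=
  ⟨f.h0 + f.h1 - f.q0, f.q0, f.h2 + f.h1 - f.q0,
    f.h0 + f.h1 + f.h2 - 2 * f.q0, f.q0 + f.q1 + f.h1, f.q0 + f.q2 + f.h1⟩

/-- The branch `h₀, h₂ < q₀` of `σ`, before reduction. -/
def sigmaHigh (f : Tuple) : Tuple :=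
  ⟨f.q0 + f.h1 - f.h2, f.h0 + f.h2 - f.q0, f.q0 + f.h1 - f.h0,
    f.h1, f.q0 + f.q1 - f.h2, f.q0 + f.q2 - f.h0⟩

/-- The branch `h₀ < q₀ < h₂` of `σ`, before reduction. -/
def sigmaAsc (f : Tuple) : Tuple :=
  ⟨f.h1, f.h0, f.h1 + f.h2 - f.h0, f.h1 + f.h2 - f.q0, f.q1, 2 * f.q0 + f.q2 + f.h1 - f.h0⟩

/-- The branch `h₂ < q₀ < h₀` of `σ`, before reduction. -/
def sigmaDesc (f : Tuple) : Tuple :=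
  ⟨f.h1 + f.h0 - f.h2, f.h2, f.h1, f.h1 + f.h0 - f.q0, 2 * f.q0 + f.q1 + f.h1 - f.h2, f.q2⟩

theorem sigma_of_eq_zero {f : Tuple} (h : f.q0 = 0) : sigma f = f :=
  if_pos h

theorem sigma_of_low {f : Tuple} (hq : f.q0 ≠ 0) (h0 : f.q0 < f.h0) (h2 : f.q0 < f.h2) :
    sigma f = (sigmaLow f).reduce := by
  rw [sigma, if_neg hq, if_pos ⟨h0, h2⟩, Tuple.reduce, sigmaLow]

theorem sigma_of_high {f : Tuple} (hq : f.q0 ≠ 0) (h0 : f.h0 < f.q0) (h2 : f.h2 < f.q0) :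
    sigma f = (sigmaHigh f).reduce := by
  rw [sigma, if_neg hq, if_neg (by omega), if_pos ⟨h0, h2⟩, Tuple.reduce, sigmaHigh]

theorem sigma_of_asc {f : Tuple} (hq : f.q0 ≠ 0) (h0 : f.h0 < f.q0) (h2 : f.q0 < f.h2) :
    sigma f = (sigmaAsc f).reduce := by
  rw [sigma, if_neg hq, if_neg (by omega), if_neg (by omega), if_pos h2, Tuple.reduce, sigmaAsc]

theorem sigma_of_desc {f : Tuple} (hq : f.q0 ≠ 0) (h2 : f.h2 < f.q0) (h0 : f.q0 < f.h0) :
    sigma f = (sigmaDesc f).reduce := by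
  rw [sigma, if_neg hq, if_neg (by omega), if_neg (by omega), if_neg (by omega), Tuple.reduce,
    sigmaDesc]

/-- Conditions (II) and (V) exclude `q₀ = h₀` and `q₀ = h₂`. -/
theorem PreAdmissible.sigma_cases {f : Tuple} (hf : PreAdmissible f) :
    (f.q0 < f.h0 ∧ f.q0 < f.h2) ∨ (f.h0 < f.q0 ∧ f.h2 < f.q0) ∨
      (f.h0 < f.q0 ∧ f.q0 < f.h2) ∨ (f.h2 < f.q0 ∧ f.q0 < f.h0) := by
  obtain ⟨⟩ := hf
  omega

theorem PreAdmissible.sigma {f : Tuple} (hf : PreAdmissible f) : PreAdmissible (sigma f) := by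
  by_cases hq : f.q0 = 0
  · rwa [sigma_of_eq_zero hq]
  rcases hf.sigma_cases with ⟨h0, h2⟩ | ⟨h0, h2⟩ | ⟨h0, h2⟩ | ⟨h2, h0⟩
  · rw [sigma_of_low hq h0 h2]
    obtain ⟨⟩ := hf
    apply preAdmissible_reduce <;> dsimp only [sigmaLow] <;> omega
  · rw [sigma_of_high hq h0 h2]
    obtain ⟨⟩ := hf
    apply preAdmissible_reduce <;> dsimp only [sigmaHigh] <;> omega
  · rw [sigma_of_asc hq h0 h2]
    obtain ⟨⟩ := hf
    apply preAdmissible_reduce <;> dsimp only [sigmaAsc] <;> omega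
  · rw [sigma_of_desc hq h2 h0]
    obtain ⟨⟩ := hf
    apply preAdmissible_reduce <;> dsimp only [sigmaDesc] <;> omega

theorem sigma_psi2 {f : Tuple} (hf : PreAdmissible f) : sigma (psi2 f) = psi2 (sigma f) := by
  by_cases hq : f.q0 = 0
  · rw [sigma_of_eq_zero hq, sigma_of_eq_zero (f := psi2 f) hq]
  rcases hf.sigma_cases with ⟨h0, h2⟩ | ⟨h0, h2⟩ | ⟨h0, h2⟩ | ⟨h2, h0⟩
  · rw [sigma_of_low hq h0 h2, psi2_reduce, sigma_of_low (f := psi2 f) hq h2 h0]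
    congr 1
    simp only [sigmaLow, psi2, Tuple.mk.injEq, true_and, and_true]
    ring
  · rw [sigma_of_high hq h0 h2, psi2_reduce, sigma_of_high (f := psi2 f) hq h2 h0]
    congr 1
    simp only [sigmaHigh, psi2, Tuple.mk.injEq, true_and, and_true]
    ring
  · rw [sigma_of_asc hq h0 h2, psi2_reduce, sigma_of_desc (f := psi2 f) hq h0 h2]
    rfl
  · rw [sigma_of_desc hq h2 h0, psi2_reduce, sigma_of_asc (f := psi2 f) hq h2 h0]
    rfl

/-- `σ` only translates `q₁` and `q₂`, and it does not change `2l₁` and `2l₂`. -/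
theorem sigma_reduce {f : Tuple} (hq : 0 < f.q0) (hq' : f.q0 < f.h2 + f.h0) :
    sigma f.reduce = sigma f := by
  have q0_mod : f.q0 % (f.h2 + f.h0) = f.q0 := Int.emod_eq_of_lt hq.le hq'
  simp only [sigma, Tuple.reduce, q0_mod, hq.ne', if_false]
  split_ifs <;> simp only [Tuple.mk.injEq, true_and]
  all_goals exact
    ⟨modEq_of_eq_add_mul (-(f.q1 / (f.h0 + f.h1))) (by rw [Int.emod_def]; ring),
      modEq_of_eq_add_mul (-(f.q2 / (f.h1 + f.h2))) (by rw [Int.emod_def]; ring)⟩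

section linearPieces

variable (f : Tuple)

theorem reduce_sigmaHigh_reflectQ :
    (sigmaHigh (reflectQ f)).reduce = (reflectQ (sigmaLow f)).reduce := by
  apply Tuple.reduce_eq_reduce <;> dsimp only [reflectQ, sigmaLow, sigmaHigh]
  · ring
  · ring
  · ring
  · exact modEq_of_eq_add_mul 0 (by ring)
  · exact modEq_of_eq_add_mul 1 (by ring)
  · exact modEq_of_eq_add_mul 1 (by ring)

theorem reduce_sigmaLow_reflectQ :
    (sigmaLow (reflectQ f)).reduce = (reflectQ (sigmaHigh f)).reduce := by
  apply Tuple.reduce_eq_reduce <;> dsimp only [reflectQ, sigmaLow, sigmaHigh]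
  · ring
  · ring
  · ring
  · exact modEq_of_eq_add_mul 0 (by ring)
  · exact modEq_of_eq_add_mul 1 (by ring)
  · exact modEq_of_eq_add_mul 1 (by ring)

theorem reduce_sigmaAsc_reflectQ :
    (sigmaAsc (reflectQ f)).reduce = (reflectQ (sigmaAsc f)).reduce := by
  apply Tuple.reduce_eq_reduce <;> dsimp only [reflectQ, sigmaAsc]
  · exact modEq_of_eq_add_mul 0 (by ring)
  · exact modEq_of_eq_add_mul 0 (by ring)
  · exact modEq_of_eq_add_mul 2 (by ring)

theorem reduce_sigmaDesc_reflectQ :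
    (sigmaDesc (reflectQ f)).reduce = (reflectQ (sigmaDesc f)).reduce := by
  apply Tuple.reduce_eq_reduce <;> dsimp only [reflectQ, sigmaDesc]
  · exact modEq_of_eq_add_mul 0 (by ring)
  · exact modEq_of_eq_add_mul 2 (by ring)
  · exact modEq_of_eq_add_mul 0 (by ring)

theorem reduce_sigmaHigh_sigmaLow : (sigmaHigh (sigmaLow f)).reduce = f.reduce := by
  apply Tuple.reduce_eq_reduce <;> dsimp only [sigmaLow, sigmaHigh]
  · ring
  · ring
  · ring
  · exact modEq_of_eq_add_mul 0 (by ring)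
  · exact modEq_of_eq_add_mul 1 (by ring)
  · exact modEq_of_eq_add_mul 1 (by ring)

theorem reduce_sigmaLow_sigmaHigh : (sigmaLow (sigmaHigh f)).reduce = f.reduce := by
  apply Tuple.reduce_eq_reduce <;> dsimp only [sigmaLow, sigmaHigh]
  · ring
  · ring
  · exact modEq_of_eq_add_mul 0 (by ring)
  · exact modEq_of_eq_add_mul 1 (by ring)
  · exact modEq_of_eq_add_mul 1 (by ring)

theorem reduce_sigmaAsc_sigmaAsc : (sigmaAsc (sigmaAsc f)).reduce = f.reduce := by
  apply Tuple.reduce_eq_reduce <;> dsimp only [sigmaAsc]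
  · ring
  · exact modEq_of_eq_add_mul 0 (by ring)
  · exact modEq_of_eq_add_mul 0 (by ring)
  · exact modEq_of_eq_add_mul 2 (by ring)

theorem reduce_sigmaDesc_sigmaDesc : (sigmaDesc (sigmaDesc f)).reduce = f.reduce := by
  apply Tuple.reduce_eq_reduce <;> dsimp only [sigmaDesc]
  · ring
  · exact modEq_of_eq_add_mul 0 (by ring)
  · exact modEq_of_eq_add_mul 2 (by ring)
  · exact modEq_of_eq_add_mul 0 (by ring)

end linearPieces

theorem sigma_psi3 {f : Tuple} (hf : PreAdmissible f) : sigma (psi3 f) = psi3 (sigma f) := by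
  by_cases hq : f.q0 = 0
  · rw [sigma_of_eq_zero hq, sigma_of_eq_zero]
    simp [psi3, hq]
  have q0_pos := hf.q0_nonneg.lt_of_ne' hq
  have reflect_pos : 0 < (reflectQ f).q0 := sub_pos.2 hf.q0_lt
  have reflect_lt : (reflectQ f).q0 < f.h2 + f.h0 := sub_lt_self _ q0_pos
  rw [psi3_eq_reduce, sigma_reduce reflect_pos reflect_lt]
  rcases hf.sigma_cases with ⟨h0, h2⟩ | ⟨h0, h2⟩ | ⟨h0, h2⟩ | ⟨h2, h0⟩
  · rw [sigma_of_low hq h0 h2, psi3_reduce, psi3_eq_reduce, sigma_of_high reflect_pos.ne',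
      reduce_sigmaHigh_reflectQ] <;> dsimp only [reflectQ] <;> omega
  · rw [sigma_of_high hq h0 h2, psi3_reduce, psi3_eq_reduce, sigma_of_low reflect_pos.ne',
      reduce_sigmaLow_reflectQ] <;> dsimp only [reflectQ] <;> omega
  · rw [sigma_of_asc hq h0 h2, psi3_reduce, psi3_eq_reduce, sigma_of_asc reflect_pos.ne',
      reduce_sigmaAsc_reflectQ] <;> dsimp only [reflectQ] <;> omega
  · rw [sigma_of_desc hq h2 h0, psi3_reduce, psi3_eq_reduce, sigma_of_desc reflect_pos.ne',
      reduce_sigmaDesc_reflectQ] <;> dsimp only [reflectQ] <;> omega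

theorem sigma_sigma {f : Tuple} (hf : PreAdmissible f) : sigma (sigma f) = f := by
  by_cases hq : f.q0 = 0
  · rw [sigma_of_eq_zero hq, sigma_of_eq_zero hq]
  have := hf.q0_nonneg.lt_of_ne' hq
  have := hf.q0_lt
  have := hf.h1_pos
  rcases hf.sigma_cases with ⟨h0, h2⟩ | ⟨h0, h2⟩ | ⟨h0, h2⟩ | ⟨h2, h0⟩
  · rw [sigma_of_low hq h0 h2, sigma_reduce, sigma_of_high, reduce_sigmaHigh_sigmaLow,
      hf.reduce_eq] <;> dsimp only [sigmaLow] <;> omega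
  · rw [sigma_of_high hq h0 h2, sigma_reduce, sigma_of_low, reduce_sigmaLow_sigmaHigh,
      hf.reduce_eq] <;> dsimp only [sigmaHigh] <;> omega
  · rw [sigma_of_asc hq h0 h2, sigma_reduce, sigma_of_asc, reduce_sigmaAsc_sigmaAsc,
      hf.reduce_eq] <;> dsimp only [sigmaAsc] <;> omega
  · rw [sigma_of_desc hq h2 h0, sigma_reduce, sigma_of_desc, reduce_sigmaDesc_sigmaDesc,
      hf.reduce_eq] <;> dsimp only [sigmaDesc] <;> omega

/-! ### Complexity and descent -/

@[simp]
theorem nu_psi1 (f : Tuple) : nu (psi1 f) = nu f := by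
  dsimp only [nu, psi1]
  ring

@[simp]
theorem nu_psi2 (f : Tuple) : nu (psi2 f) = nu f := by
  dsimp only [nu, psi2]
  ring

@[simp]
theorem nu_psi3 (f : Tuple) : nu (psi3 f) = nu f := rfl

@[simp]
theorem nu_psi1_iterate (f : Tuple) (i : ℕ) : nu (psi1^[i] f) = nu f := by
  induction i generalizing f with
  | zero => rfl
  | succ i ih => rw [Function.iterate_succ_apply, ih, nu_psi1]

theorem forall_psi1_iterate {P : Tuple → Prop} {f : Tuple} :
    (∀ i : ℕ, P (psi1^[i] f)) ↔ P f ∧ P (psi1 f) ∧ P (psi1 (psi1 f)) := by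
  refine ⟨fun h => ⟨h 0, h 1, h 2⟩, ?_⟩
  rintro ⟨h0, h1, h2⟩ i
  induction i generalizing f with
  | zero => exact h0
  | succ _ ih => exact ih h1 h2 h0

theorem psi1_iterate_psi2 (f : Tuple) (i : ℕ) : psi1^[i] (psi2 f) = psi2 (psi1^[2 * i] f) := by
  have h : Function.Semiconj psi2 psi1^[2] psi1 := fun _ => rfl
  rw [Function.iterate_mul]
  exact (h.iterate_right i f).symm

theorem psi1_iterate_psi3 (f : Tuple) (i : ℕ) : psi1^[i] (psi3 f) = psi3 (psi1^[i] f) := by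
  have h : Function.Semiconj psi3 psi1 psi1 := fun _ => rfl
  exact (h.iterate_right i f).symm

theorem psi1_iterate_three_mul_add (f : Tuple) (i j : ℕ) :
    psi1^[3 * i + j] f = psi1^[j] f := by
  have h : psi1^[3] = id := rfl
  rw [add_comm, Function.iterate_add_apply, Function.iterate_mul, h, Function.iterate_id, id]

namespace PreAdmissible

variable {f : Tuple}

theorem nu_sigma (hf : PreAdmissible f) (hq : f.q0 ≠ 0) :
    nu (GMN.sigma f) =
      nu f + f.h1 - min (min f.h0 f.h2) (min f.q0 (f.h0 + f.h2 - f.q0)) := by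
  rcases hf.sigma_cases with ⟨h0, h2⟩ | ⟨h0, h2⟩ | ⟨h0, h2⟩ | ⟨h2, h0⟩
  · rw [sigma_of_low hq h0 h2]
    dsimp only [nu, Tuple.reduce, sigmaLow]
    omega
  · rw [sigma_of_high hq h0 h2]
    dsimp only [nu, Tuple.reduce, sigmaHigh]
    omega
  · rw [sigma_of_asc hq h0 h2]
    dsimp only [nu, Tuple.reduce, sigmaAsc]
    omega
  · rw [sigma_of_desc hq h2 h0]
    dsimp only [nu, Tuple.reduce, sigmaDesc]
    omega

theorem nu_le_nu_sigma (hf : PreAdmissible f) (h : min f.h0 f.h2 ≤ f.h1) :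
    nu f ≤ nu (GMN.sigma f) := by
  by_cases hq : f.q0 = 0
  · rw [sigma_of_eq_zero hq]
  · rw [hf.nu_sigma hq]
    omega

theorem eq_or_of_nu_sigma_eq (hf : PreAdmissible f) (h : nu (GMN.sigma f) = nu f) :
    GMN.sigma f = f ∨ f.h1 = min f.h0 f.h2 ∧
      (GMN.sigma f).h1 = min (GMN.sigma f).h0 (GMN.sigma f).h2 := by
  by_cases hq : f.q0 = 0
  · exact .inl (sigma_of_eq_zero hq)
  rw [hf.nu_sigma hq] at h
  have h1_eq : f.h1 = min f.h0 f.h2 := by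
    obtain ⟨⟩ := hf
    omega
  refine .inr ⟨h1_eq, ?_⟩
  rcases hf.sigma_cases with ⟨h0, h2⟩ | ⟨h0, h2⟩ | ⟨h0, h2⟩ | ⟨h2, h0⟩
  · omega
  · omega
  · rw [sigma_of_asc hq h0 h2]
    dsimp only [Tuple.reduce, sigmaAsc]
    omega
  · rw [sigma_of_desc hq h2 h0]
    dsimp only [Tuple.reduce, sigmaDesc]
    omega

end PreAdmissible

/-- No rotation of `f` followed by `σ` lowers the complexity. Since the other generators preserve
the complexity, such `f` are the local minima of `ν` in the `G`-orbit. -/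
def IsLocalMin (f : Tuple) : Prop := ∀ i : ℕ, nu f ≤ nu (sigma (psi1^[i] f))

theorem isLocalMin_iff {f : Tuple} :
    IsLocalMin f ↔ nu f ≤ nu (sigma f) ∧ nu f ≤ nu (sigma (psi1 f)) ∧
      nu f ≤ nu (sigma (psi1 (psi1 f))) :=
  forall_psi1_iterate (P := fun g => nu f ≤ nu (sigma g))

theorem PreAdmissible.isLocalMin {f : Tuple} (hf : PreAdmissible f)
    (h : f.h1 = min f.h0 f.h2) : IsLocalMin f := by
  refine isLocalMin_iff.2 ⟨hf.nu_le_nu_sigma h.ge, ?_, ?_⟩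
  · rw [← nu_psi1 f]
    exact hf.psi1.nu_le_nu_sigma (by dsimp only [GMN.psi1]; omega)
  · rw [← nu_psi1 f, ← nu_psi1 (GMN.psi1 f)]
    exact hf.psi1.psi1.nu_le_nu_sigma (by dsimp only [GMN.psi1]; omega)

theorem IsLocalMin.psi1 {f : Tuple} (h : IsLocalMin f) : IsLocalMin (psi1 f) := fun i => by
  simpa using h (i + 1)

theorem IsLocalMin.psi2 {f : Tuple} (h : IsLocalMin f) (hf : PreAdmissible f) :
    IsLocalMin (psi2 f) := fun i => by
  rw [psi1_iterate_psi2, sigma_psi2 (hf.psi1_iterate _), nu_psi2, nu_psi2]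
  exact h (2 * i)

theorem IsLocalMin.psi3 {f : Tuple} (h : IsLocalMin f) (hf : PreAdmissible f) :
    IsLocalMin (psi3 f) := fun i => by
  rw [psi1_iterate_psi3, sigma_psi3 (hf.psi1_iterate _), nu_psi3, nu_psi3]
  exact h i

/-- Applying `σ` to rotations as long as this lowers the complexity leads from the given tuple to a
local minimum of complexity `n`. -/
inductive DescendsTo (n : ℤ) : Tuple → Prop
  | base {f : Tuple} (h : IsLocalMin f) (hn : nu f = n) : DescendsTo n f
  | step {f : Tuple} (i : ℕ) (hlt : nu (sigma (psi1^[i] f)) < nu f)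
      (h : DescendsTo n (sigma (psi1^[i] f))) : DescendsTo n f

namespace DescendsTo

variable {n : ℤ} {f : Tuple}

theorem le_nu (h : DescendsTo n f) : n ≤ nu f := by
  induction h with
  | base _ hn => exact hn.ge
  | step _ hlt _ ih => exact ih.trans hlt.le

theorem nu_eq (h : DescendsTo n f) (hf : IsLocalMin f) : nu f = n := by
  cases h with
  | base _ hn => exact hn
  | step i hlt _ => exact absurd hlt (hf i).not_gt

theorem psi1 (h : DescendsTo n f) : DescendsTo n (psi1 f) := by
  cases h with
  | base h hn => exact .base h.psi1 (by rwa [nu_psi1])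
  | step i hlt h =>
    have rotate : GMN.psi1^[i + 2] (GMN.psi1 f) = GMN.psi1^[i] f := by
      rw [← Function.iterate_succ_apply, ← psi1_iterate_three_mul_add f 1 i]
      congr 1
      omega
    exact .step (i + 2) (by rwa [rotate, nu_psi1]) (by rwa [rotate])

theorem psi2 (h : DescendsTo n f) (hf : PreAdmissible f) : DescendsTo n (psi2 f) := by
  induction h with
  | base h hn => exact .base (h.psi2 hf) (by rwa [nu_psi2])
  | @step f i hlt _ ih =>
    have rotate : sigma (GMN.psi1^[2 * i] (GMN.psi2 f)) = GMN.psi2 (sigma (GMN.psi1^[i] f)) := by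
      rw [psi1_iterate_psi2, sigma_psi2 (hf.psi1_iterate _), ← psi1_iterate_three_mul_add f i i]
      ring_nf
    exact .step (2 * i) (by rwa [rotate, nu_psi2, nu_psi2])
      (by rw [rotate]; exact ih (hf.psi1_iterate i).sigma)

theorem psi3 (h : DescendsTo n f) (hf : PreAdmissible f) : DescendsTo n (psi3 f) := by
  induction h with
  | base h hn => exact .base (h.psi3 hf) hn
  | @step f i hlt _ ih =>
    have rotate : sigma (GMN.psi1^[i] (GMN.psi3 f)) = GMN.psi3 (sigma (GMN.psi1^[i] f)) := by
      rw [psi1_iterate_psi3, sigma_psi3 (hf.psi1_iterate _)]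
    exact .step i (by rwa [rotate]) (by rw [rotate]; exact ih (hf.psi1_iterate i).sigma)

/-- A descending rotation brings the strict minimum of `h₀, h₁, h₂` to the middle, so it is
unique. -/
theorem sigma_of_lt (h : DescendsTo n f) (hf : PreAdmissible f) (hlt : nu (sigma f) < nu f) :
    DescendsTo n (sigma f) := by
  have unique : ∀ i, nu (GMN.sigma (GMN.psi1^[i] f)) < nu f → GMN.psi1^[i] f = f := by
    refine forall_psi1_iterate (P := fun g => nu (GMN.sigma g) < nu f → g = f) |>.2
      ⟨fun _ => rfl, fun hlt' => ?_, fun hlt' => ?_⟩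
    · have := mt hf.nu_le_nu_sigma hlt.not_ge
      have := mt hf.psi1.nu_le_nu_sigma (by simpa using hlt')
      dsimp only [GMN.psi1] at this
      omega
    · have := mt hf.nu_le_nu_sigma hlt.not_ge
      have := mt hf.psi1.psi1.nu_le_nu_sigma (by simpa using hlt')
      dsimp only [GMN.psi1] at this
      omega
  cases h with
  | base h _ => exact absurd hlt (h 0).not_gt
  | step i hlt' h => rwa [unique i hlt'] at h

theorem sigma (h : DescendsTo n f) (hf : PreAdmissible f) : DescendsTo n (sigma f) := by
  rcases lt_trichotomy (nu (GMN.sigma f)) (nu f) with hlt | heq | hgt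
  · exact h.sigma_of_lt hf hlt
  · rcases hf.eq_or_of_nu_sigma_eq heq with hfix | ⟨hmin, hmin'⟩
    · rwa [hfix]
    · exact .base (hf.sigma.isLocalMin hmin') (heq.trans (h.nu_eq (hf.isLocalMin hmin)))
  · refine .step 0 ?_ ?_ <;> rw [Function.iterate_zero, id, sigma_sigma hf]
    exacts [hgt, h]

end DescendsTo

theorem GStep.descendsTo_iff {n : ℤ} {f g : Tuple} (h : GStep f g) :
    DescendsTo n f ↔ DescendsTo n g := by
  have hf := h.1.preAdmissible
  rcases h with ⟨-, -, rfl | rfl | rfl | rfl⟩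
  · exact ⟨.psi1, fun h => h.psi1.psi1⟩
  · exact ⟨fun h => h.psi2 hf, fun h => h.psi2 hf.psi2⟩
  · exact ⟨fun h => h.psi3 hf, fun h => psi3_psi3 hf ▸ h.psi3 hf.psi3⟩
  · exact ⟨fun h => h.sigma hf, fun h => sigma_sigma hf ▸ h.sigma hf.sigma⟩

theorem GEquiv.descendsTo_iff {n : ℤ} {f g : Tuple} (h : GEquiv f g) :
    DescendsTo n f ↔ DescendsTo n g := by
  induction h with
  | rel _ _ h => exact h.descendsTo_iff
  | refl _ => rfl
  | symm _ _ _ ih => exact ih.symm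
  | trans _ _ _ _ _ ih₁ ih₂ => exact ih₁.trans ih₂

theorem IsLocalMin.nu_le_of_gEquiv {f g : Tuple} (h : IsLocalMin f) (hfg : GEquiv f g) :
    nu f ≤ nu g :=
  (hfg.descendsTo_iff.1 (.base h rfl)).le_nu

/-! ### Counting `{2,3}`-residues -/

section Periodic

variable {α : Type*} {F : ℤ → α} {m : ℤ}

theorem apply_eq_of_modEq {x y : ℤ} (hF : Function.Periodic F m) (h : x ≡ y [ZMOD m]) :
    F x = F y := by
  obtain ⟨k, rfl⟩ := Int.modEq_iff_add_fac.1 h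
  rw [mul_comm]
  exact (hF.int_mul k x).symm

theorem apply_emod (hF : Function.Periodic F m) (x : ℤ) : F (x % m) = F x :=
  apply_eq_of_modEq hF (Int.mod_modEq x m)

theorem exists_modEq_mem_Ico (hm : 0 < m) (a x : ℤ) :
    ∃ r, x ≡ r [ZMOD m] ∧ a ≤ r ∧ r < a + m := by
  refine ⟨a + (x - a) % m, ?_, ?_, ?_⟩
  · exact modEq_of_eq_add_mul ((x - a) / m) (by rw [Int.emod_def]; ring)
  · exact le_add_of_nonneg_right (Int.emod_nonneg _ hm.ne')
  · exact (add_lt_add_iff_left a).2 (Int.emod_lt_of_pos _ hm)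

theorem exists_periodic_extension (hm : 0 < m) (a : ℤ) (F : ℤ → α) :
    ∃ A, Function.Periodic A m ∧ ∀ x, a ≤ x → x < a + m → A x = F x := by
  refine ⟨fun x => F (toIcoMod hm a x), fun x => ?_, fun x hx hx' => ?_⟩
  · dsimp only
    rw [toIcoMod_add_right]
  · dsimp only
    rw [(toIcoMod_eq_self hm).2 ⟨hx, hx'⟩]

end Periodic

/-- A two-valued function on `⋃ᵢ {i} × ℤ_{2lᵢ}`, lifted to `ℤ₃ × ℤ`, that is invariant under `ι₂`
(`arc2`) and `ι₃` (`arc3`). There are `2 ^ n` of them if `Γ(f)` has `n` `{2,3}`-residues. -/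
structure IsColouring (f : Tuple) (c : ZMod 3 → ℤ → Bool) : Prop where
  periodic : ∀ i, Function.Periodic (c i) (f.twol i)
  arc2 : ∀ i t, 0 ≤ t → t < f.h i → c i t = c (i + 1) (-1 - t)
  arc3 : ∀ i t, 0 ≤ t → t < f.h i → c i (t + f.q i) = c (i + 1) (-1 - t + f.q (i + 1))

/-- The set of all `IsColouring` functions of `f`. -/
def colourings (f : Tuple) : Set (ZMod 3 → ℤ → Bool) := {c | IsColouring f c}

/-- The orbit relation of the colours `2` and `3` on the vertices. -/
def orbitSetoid (f : Tuple) : Setoid (Vtx f) where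
  r a b := OrbRel f {2, 3} a b
  iseqv := ⟨fun _ => .refl _, .symm _ _, .trans _ _ _⟩

theorem threeOrbits_iff_card (f : Tuple) :
    ThreeOrbits f {2, 3} ↔ Nat.card (Quotient (orbitSetoid f)) = 3 := by
  have mk_eq_mk (a b : Vtx f) :
      (⟦a⟧ : Quotient (orbitSetoid f)) = ⟦b⟧ ↔ OrbRel f {2, 3} a b := Quotient.eq
  have univ_eq_iff (a b c : Vtx f) :
      (Set.univ : Set (Quotient (orbitSetoid f))) = {⟦a⟧, ⟦b⟧, ⟦c⟧} ↔
        ∀ v : Vtx f, OrbRel f {2, 3} a v ∨ OrbRel f {2, 3} b v ∨ OrbRel f {2, 3} c v := by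
    rw [eq_comm, Set.eq_univ_iff_forall, Quotient.forall]
    refine forall_congr' fun v => ?_
    rw [Set.mem_insert_iff, Set.mem_insert_iff, Set.mem_singleton_iff, eq_comm, mk_eq_mk, eq_comm,
      mk_eq_mk, eq_comm, mk_eq_mk]
  rw [← Set.ncard_univ, Set.ncard_eq_three]
  simp_rw [Quotient.exists, univ_eq_iff, ne_eq, mk_eq_mk]
  exact ⟨fun ⟨a, b, c, ha, hb, hc, hab, hac, hbc, h⟩ =>
      ⟨⟨a, ha⟩, ⟨b, hb⟩, ⟨c, hc⟩, hab, hac, hbc, fun v => h v v.2⟩,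
    fun ⟨a, b, c, hab, hac, hbc, h⟩ =>
      ⟨a, b, c, a.2, b.2, c.2, hab, hac, hbc, fun v hv => h ⟨v, hv⟩⟩⟩

theorem finite_vtx (f : Tuple) : (Vtx f).Finite := by
  have : Vtx f = ⋃ i : ZMod 3, Prod.mk i '' Set.Ico 0 (f.twol i) := by
    ext ⟨i, x⟩
    simp [Vtx]
  rw [this]
  exact Set.finite_iUnion fun i => (Set.finite_Ico _ _).image _

section

variable {f : Tuple} {c : ZMod 3 → ℤ → Bool}

theorem emod_mem_vtx (hf : CondI f) (i : ZMod 3) (x : ℤ) : (i, x % f.twol i) ∈ Vtx f := by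
  have : 0 < f.twol i := add_pos (hf _) (hf _)
  exact ⟨Int.emod_nonneg _ this.ne', Int.emod_lt_of_pos _ this⟩

theorem apply_iota2 (periodic : ∀ i, Function.Periodic (c i) (f.twol i))
    (arc : ∀ i t, 0 ≤ t → t < f.h i → c i t = c (i + 1) (-1 - t)) {p : ZMod 3 × ℤ}
    (hp : p ∈ Vtx f) : c (iota2 f p).1 (iota2 f p).2 = c p.1 p.2 := by
  obtain ⟨p_nonneg, p_lt⟩ := hp
  have twol_eq : f.twol p.1 = f.h (p.1 - 1) + f.h p.1 := rfl
  rw [iota2]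
  split_ifs with h
  · dsimp only
    rw [apply_emod (periodic _), arc _ _ p_nonneg h, neg_sub_comm]
  · dsimp only
    rw [apply_emod (periodic _), arc _ _ (by omega) (by omega), sub_add_cancel]
    exact apply_eq_of_modEq (periodic _) (modEq_of_eq_add_mul (-1) (by ring))

namespace IsColouring

theorem apply_iota3 (hc : IsColouring f c) (hf : CondI f) (p : ZMod 3 × ℤ) :
    c (iota3 f p).1 (iota3 f p).2 = c p.1 p.2 := by
  have shifted_periodic (i) : Function.Periodic (fun x => c i (x + f.q i)) (f.twol i) :=
    (hc.periodic i).add_const _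
  calc c (iota3 f p).1 (iota3 f p).2
    _ = c (iota2 f (rhoInv f p)).1 ((iota2 f (rhoInv f p)).2 + f.q (iota2 f (rhoInv f p)).1) :=
      apply_emod (hc.periodic _) _
    _ = c p.1 ((p.2 - f.q p.1) % f.twol p.1 + f.q p.1) :=
      apply_iota2 shifted_periodic hc.arc3 (emod_mem_vtx hf _ _)
    _ = c p.1 (p.2 - f.q p.1 + f.q p.1) := apply_emod (shifted_periodic p.1) _
    _ = c p.1 p.2 := by rw [sub_add_cancel]

theorem apply_eq_of_orbRel (hc : IsColouring f c) (hf : CondI f) {a b : ZMod 3 × ℤ}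
    (h : OrbRel f {2, 3} a b) : c a.1 a.2 = c b.1 b.2 := by
  induction h with
  | rel a b h =>
    obtain ⟨ha, -, k, rfl | rfl, rfl⟩ := h
    · exact (apply_iota2 hc.periodic hc.arc2 ha).symm
    · exact (hc.apply_iota3 hf a).symm
  | refl a => rfl
  | symm a b _ ih => exact ih.symm
  | trans a b d _ _ ih ih' => exact ih.trans ih'

theorem of_orbRel (hf : CondI f) (periodic : ∀ i, Function.Periodic (c i) (f.twol i))
    (h : ∀ a ∈ Vtx f, ∀ b ∈ Vtx f, OrbRel f {2, 3} a b → c a.1 a.2 = c b.1 b.2) :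
    IsColouring f c where
  periodic := periodic
  arc2 i t ht ht' := by
    have ha : (i, t) ∈ Vtx f := ⟨ht, ht'.trans (lt_add_of_pos_left _ (hf _))⟩
    have hb := emod_mem_vtx hf (i + 1) (-t - 1)
    have := h _ ha _ hb (.rel _ _ ⟨ha, hb, 2, by simp, by simp [iota, iota2, ht']⟩)
    rwa [apply_emod (periodic _), neg_sub_comm] at this
  arc3 i t ht ht' := by
    have ht'' : t < f.twol i := ht'.trans (lt_add_of_pos_left _ (hf _))
    have ha := emod_mem_vtx hf i (t + f.q i)
    have hb := emod_mem_vtx hf (i + 1) (-t - 1 + f.q (i + 1))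
    have := h _ ha _ hb (.rel _ _ ⟨ha, hb, 3, by simp, by
      simp [iota, iota3, rho, rhoInv, iota2, Int.emod_eq_of_lt ht ht'', ht']⟩)
    rwa [apply_emod (periodic _), apply_emod (periodic _), neg_sub_comm] at this

end IsColouring

/-- Colourings are the two-valued functions on the set of `{2,3}`-residues. -/
def colouringEquiv (hf : CondI f) : (Quotient (orbitSetoid f) → Bool) ≃ colourings f where
  toFun u := ⟨fun i x => u ⟦⟨(i, x % f.twol i), emod_mem_vtx hf i x⟩⟧,
    .of_orbRel hf (fun i x => by simp only [Int.add_emod_right]) fun a ha b hb h => by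
      congr 1
      refine Quotient.sound (show OrbRel f {2, 3} _ _ from ?_)
      simpa only [Int.emod_eq_of_lt ha.1 ha.2, Int.emod_eq_of_lt hb.1 hb.2] using h⟩
  invFun c := Quotient.lift (fun v => c.1 v.1.1 v.1.2) fun _ _ h => c.2.apply_eq_of_orbRel hf h
  left_inv u := by
    funext q
    induction q using Quotient.inductionOn with | h v =>
    simp only [Quotient.lift_mk, Int.emod_eq_of_lt v.2.1 v.2.2]
  right_inv c := by
    ext i x
    exact apply_emod (c.2.periodic i) x

theorem threeOrbits_iff_encard (hf : CondI f) :
    ThreeOrbits f {2, 3} ↔ (colourings f).encard = 8 := by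
  have := (finite_vtx f).to_subtype
  rw [threeOrbits_iff_card, ← ENat.card_coe_set_eq, ← ENat.card_congr (colouringEquiv hf),
    ENat.card_eq_coe_natCard, Nat.card_fun, Nat.card_eq_fintype_card (α := Bool),
    Fintype.card_bool, show (8 : ℕ∞) = ((2 ^ 3 : ℕ) : ℕ∞) from rfl, Nat.cast_inj,
    Nat.pow_right_inj one_lt_two]

end

/-! ### The generators of `G` act on colourings -/

namespace IsColouring

variable {f : Tuple} {c : ZMod 3 → ℤ → Bool}

theorem congr_modEq {g : Tuple} (hc : IsColouring f c) (hh : g.h = f.h)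
    (hq : ∀ i, g.q i ≡ f.q i [ZMOD f.twol i]) : IsColouring g c where
  periodic i := by
    rw [Tuple.twol, hh]
    exact hc.periodic i
  arc2 i t ht ht' := hc.arc2 i t ht (hh ▸ ht')
  arc3 i t ht ht' := by
    rw [apply_eq_of_modEq (hc.periodic i) ((hq i).add_left t),
      apply_eq_of_modEq (hc.periodic (i + 1)) ((hq (i + 1)).add_left _)]
    exact hc.arc3 i t ht (hh ▸ ht')

theorem reduce (hc : IsColouring f c) : IsColouring f.reduce c :=
  hc.congr_modEq rfl (forall_zmod_three.2 ⟨Int.mod_modEq _ _, Int.mod_modEq _ _, Int.mod_modEq _ _⟩)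

theorem psi1 (hc : IsColouring f c) : IsColouring (psi1 f) fun i => c (i + 1) := by
  have hh : ∀ i, (GMN.psi1 f).h i = f.h (i + 1) := forall_zmod_three.2 ⟨rfl, rfl, rfl⟩
  have hq : ∀ i, (GMN.psi1 f).q i = f.q (i + 1) := forall_zmod_three.2 ⟨rfl, rfl, rfl⟩
  have hl : ∀ i, (GMN.psi1 f).twol i = f.twol (i + 1) := forall_zmod_three.2 ⟨rfl, rfl, rfl⟩
  constructor
  · exact fun i => hl i ▸ hc.periodic (i + 1)
  · exact fun i t ht ht' => hc.arc2 (i + 1) t ht (hh i ▸ ht')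
  · intro i t ht ht'
    rw [hq, hq]
    exact hc.arc3 (i + 1) t ht (hh i ▸ ht')

theorem psi2 (hc : IsColouring f c) :
    IsColouring (psi2 f) fun i x => c (-i) (-1 - x + f.q (-i)) := by
  have hh : ∀ i, (GMN.psi2 f).h i = f.h (-(i + 1)) := forall_zmod_three.2 ⟨rfl, rfl, rfl⟩
  have hq : ∀ i, (GMN.psi2 f).q i = f.q (-i) := forall_zmod_three.2 ⟨rfl, rfl, rfl⟩
  have hl : ∀ i, (GMN.psi2 f).twol i = f.twol (-i) :=
    forall_zmod_three.2 ⟨add_comm _ _, add_comm _ _, add_comm _ _⟩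
  have neg_add_one (i : ZMod 3) : -(i + 1) + 1 = -i := by ring
  constructor
  · intro i x
    rw [hl]
    exact apply_eq_of_modEq (hc.periodic _) (modEq_of_eq_add_mul (-1) (by ring))
  · intro i t ht ht'
    have := hc.arc3 (-(i + 1)) t ht (hh i ▸ ht')
    rw [neg_add_one] at this
    rw [← this, sub_sub_cancel]
  · intro i t ht ht'
    have := hc.arc2 (-(i + 1)) t ht (hh i ▸ ht')
    rw [neg_add_one] at this
    rw [hq, hq]
    ring_nf at this ⊢
    exact this.symm

theorem psi3 (hc : IsColouring f c) : IsColouring (psi3 f) fun i x => c i (x + f.q i) := by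
  have hq : ∀ i, (GMN.psi3 f).q i ≡ -f.q i [ZMOD f.twol i] :=
    forall_zmod_three.2 ⟨Int.mod_modEq _ _, Int.mod_modEq _ _, Int.mod_modEq _ _⟩
  have cancel (i x) : c i (x + (GMN.psi3 f).q i + f.q i) = c i x :=
    apply_eq_of_modEq (hc.periodic i) (by simpa using ((hq i).add_left x).add_right (f.q i))
  constructor
  · exact fun i => (hc.periodic i).add_const _
  · exact hc.arc3
  · intro i t ht ht'
    rw [cancel, cancel]
    exact hc.arc2 i t ht ht'

end IsColouring

theorem encard_colourings_le_reduce (f : Tuple) :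
    (colourings f).encard ≤ (colourings f.reduce).encard :=
  Set.encard_le_encard fun _ hc => IsColouring.reduce hc

theorem encard_colourings_le_psi1 (f : Tuple) :
    (colourings f).encard ≤ (colourings (psi1 f)).encard := by
  refine Set.encard_le_encard_of_injOn (fun _ hc => IsColouring.psi1 hc) fun c _ d _ h => ?_
  funext i
  simpa using congrFun h (i - 1)

theorem encard_colourings_le_psi2 (f : Tuple) :
    (colourings f).encard ≤ (colourings (psi2 f)).encard := by
  refine Set.encard_le_encard_of_injOn (fun _ hc => IsColouring.psi2 hc) fun c _ d _ h => ?_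
  funext i x
  simpa using congrFun₂ h (-i) (-1 - (x - f.q i))

theorem encard_colourings_le_psi3 (f : Tuple) :
    (colourings f).encard ≤ (colourings (psi3 f)).encard := by
  refine Set.encard_le_encard_of_injOn (fun _ hc => IsColouring.psi3 hc) fun c _ d _ h => ?_
  funext i x
  simpa using congrFun₂ h i (x - f.q i)

theorem Admissible.psi1 {f : Tuple} (hf : Admissible f) : Admissible (psi1 f) := by
  have pre := preAdmissible_iff.1 hf.preAdmissible.psi1
  refine ⟨pre.1, pre.2, (threeOrbits_iff_encard pre.1.1).2 ?_⟩
  rw [← (threeOrbits_iff_encard hf.1.1).1 hf.2.2]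
  refine le_antisymm ?_ (encard_colourings_le_psi1 f)
  exact (encard_colourings_le_psi1 _).trans (encard_colourings_le_psi1 (GMN.psi1 (GMN.psi1 f)))

/-! ### Eliminating the circle `{0} × ℤ_{2l₀}` -/

/-- The conditions on the restrictions `B`, `C` of a colouring to the circles `1` and `2` that
remain when circle `0` is eliminated. The last four fields are named after the circles from which
an `ι₂`-arc and an `ι₃`-arc lead to the same vertex of circle `0`. -/
structure IsReduced (f : Tuple) (B C : ℤ → Bool) : Prop where
  perB : Function.Periodic B (f.h0 + f.h1)
  perC : Function.Periodic C (f.h1 + f.h2)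
  arc2 : ∀ t, 0 ≤ t → t < f.h1 → B t = C (-1 - t)
  arc3 : ∀ t, 0 ≤ t → t < f.h1 → B (t + f.q1) = C (-1 - t + f.q2)
  arcBB : ∀ s t, 0 ≤ s → s < f.h0 → 0 ≤ t → t < f.h0 → s ≡ t + f.q0 [ZMOD f.h2 + f.h0] →
    B (-1 - s) = B (-1 - t + f.q1)
  arcBC : ∀ s t, 0 ≤ s → s < f.h0 → 0 ≤ t → t < f.h2 → s ≡ -1 - t + f.q0 [ZMOD f.h2 + f.h0] →
    B (-1 - s) = C (t + f.q2)
  arcCB : ∀ s t, 0 ≤ s → s < f.h2 → 0 ≤ t → t < f.h0 → -1 - s ≡ t + f.q0 [ZMOD f.h2 + f.h0] →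
    C s = B (-1 - t + f.q1)
  arcCC : ∀ s t, 0 ≤ s → s < f.h2 → 0 ≤ t → t < f.h2 →
    -1 - s ≡ -1 - t + f.q0 [ZMOD f.h2 + f.h0] → C s = C (t + f.q2)

theorem IsColouring.isReduced {f : Tuple} {c : ZMod 3 → ℤ → Bool} (hc : IsColouring f c) :
    IsReduced f (c 1) (c 2) where
  perB := hc.periodic 1
  perC := hc.periodic 2
  arc2 := hc.arc2 1
  arc3 := hc.arc3 1
  arcBB s t hs hs' ht ht' hst :=
    (hc.arc2 0 s hs hs').symm.trans
      ((apply_eq_of_modEq (hc.periodic 0) hst).trans (hc.arc3 0 t ht ht'))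
  arcBC s t hs hs' ht ht' hst :=
    (hc.arc2 0 s hs hs').symm.trans
      ((apply_eq_of_modEq (hc.periodic 0) hst).trans (hc.arc3 2 t ht ht').symm)
  arcCB s t hs hs' ht ht' hst :=
    (hc.arc2 2 s hs hs').trans
      ((apply_eq_of_modEq (hc.periodic 0) hst).trans (hc.arc3 0 t ht ht'))
  arcCC s t hs hs' ht ht' hst :=
    (hc.arc2 2 s hs hs').trans
      ((apply_eq_of_modEq (hc.periodic 0) hst).trans (hc.arc3 2 t ht ht').symm)

section Elimination

variable {f : Tuple}

theorem IsReduced.exists_isColouring (h0 : 0 < f.h0) (h2 : 0 < f.h2) {B C : ℤ → Bool}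
    (h : IsReduced f B C) : ∃ c, IsColouring f c ∧ c 1 = B ∧ c 2 = C := by
  have hm : 0 < f.h2 + f.h0 := add_pos h2 h0
  obtain ⟨A, perA, hA⟩ := exists_periodic_extension hm (-f.h2)
    fun x => if 0 ≤ x then B (-1 - x) else C (-1 - x)
  have arcAB (t) (ht : 0 ≤ t) (ht' : t < f.h0) : A t = B (-1 - t) := by
    rw [hA t (by omega) (by omega), if_pos ht]
  have arcCA (t) (ht : 0 ≤ t) (ht' : t < f.h2) : C t = A (-1 - t) := by
    rw [hA _ (by omega) (by omega), if_neg (by omega), sub_sub_cancel]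
  have vertex (x : ℤ) : (∃ s, 0 ≤ s ∧ s < f.h0 ∧ x ≡ s [ZMOD f.h2 + f.h0]) ∨
      ∃ s, 0 ≤ s ∧ s < f.h2 ∧ x ≡ -1 - s [ZMOD f.h2 + f.h0] := by
    obtain ⟨r, hr, hr1, hr2⟩ := exists_modEq_mem_Ico hm (-f.h2) x
    rcases le_or_gt 0 r with hr0 | hr0
    · exact .inl ⟨r, hr0, by omega, hr⟩
    · exact .inr ⟨-1 - r, by omega, by omega, by rwa [sub_sub_cancel]⟩
  have arcAB3 (t) (ht : 0 ≤ t) (ht' : t < f.h0) : A (t + f.q0) = B (-1 - t + f.q1) := by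
    rcases vertex (t + f.q0) with ⟨s, hs, hs', hst⟩ | ⟨s, hs, hs', hst⟩
    · rw [apply_eq_of_modEq perA hst, arcAB s hs hs', h.arcBB s t hs hs' ht ht' hst.symm]
    · rw [apply_eq_of_modEq perA hst, ← arcCA s hs hs', h.arcCB s t hs hs' ht ht' hst.symm]
  have arcCA3 (t) (ht : 0 ≤ t) (ht' : t < f.h2) : C (t + f.q2) = A (-1 - t + f.q0) := by
    rcases vertex (-1 - t + f.q0) with ⟨s, hs, hs', hst⟩ | ⟨s, hs, hs', hst⟩
    · rw [apply_eq_of_modEq perA hst, arcAB s hs hs', h.arcBC s t hs hs' ht ht' hst.symm]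
    · rw [apply_eq_of_modEq perA hst, ← arcCA s hs hs', h.arcCC s t hs hs' ht ht' hst.symm]
  let c : Fin 3 → ℤ → Bool := ![A, B, C]
  exact ⟨c, ⟨forall_zmod_three.2 ⟨perA, h.perB, h.perC⟩,
    forall_zmod_three.2 ⟨arcAB, h.arc2, arcCA⟩, forall_zmod_three.2 ⟨arcAB3, h.arc3, arcCA3⟩⟩,
    rfl, rfl⟩

theorem encard_colourings_eq (h0 : 0 < f.h0) (h2 : 0 < f.h2) :
    (colourings f).encard = {p : (ℤ → Bool) × (ℤ → Bool) | IsReduced f p.1 p.2}.encard := by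
  have bij : Set.BijOn (fun c : ZMod 3 → ℤ → Bool => (c 1, c 2)) (colourings f)
      {p | IsReduced f p.1 p.2} := by
    refine ⟨fun c hc => hc.isReduced, fun c hc d hd hcd => ?_, fun p hp => ?_⟩
    · obtain ⟨eq1, eq2⟩ := Prod.mk.inj hcd
      refine funext (forall_zmod_three.2 ⟨funext fun x => ?_, eq1, eq2⟩)
      obtain ⟨r, hr, hr1, hr2⟩ := exists_modEq_mem_Ico (add_pos h2 h0) (-f.h2) x
      rw [apply_eq_of_modEq (hc.periodic 0) hr, apply_eq_of_modEq (hd.periodic 0) hr]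
      rcases le_or_gt 0 r with hr0 | hr0
      · exact (hc.arc2 0 r hr0 (by change r < f.h0; omega)).trans
          ((congrFun eq1 _).trans (hd.arc2 0 r hr0 (by change r < f.h0; omega)).symm)
      · have arc {c : ZMod 3 → ℤ → Bool} (hc : IsColouring f c) : c 2 (-1 - r) = c 0 r := by
          have := hc.arc2 2 (-1 - r) (by omega) (by change -1 - r < f.h2; omega)
          rwa [sub_sub_cancel] at this
        rw [← arc hc, ← arc hd, eq2]
    · obtain ⟨c, hc, eq1, eq2⟩ := IsReduced.exists_isColouring h0 h2 hp
      exact ⟨c, hc, Prod.ext eq1 eq2⟩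
  exact Set.encard_congr bij.equiv

end Elimination

/-! ### `σ` preserves the number of `{2,3}`-residues -/

theorem eq_or_eq_sub_of_modEq {a b m : ℤ} (h : a ≡ b [ZMOD m]) (lower : -(2 * m) < a - b)
    (upper : a - b < m) : a = b ∨ a = b - m := by
  obtain ⟨k, rfl⟩ := Int.modEq_iff_add_fac.1 h
  have hk : -1 < k := by
    by_contra! hk
    nlinarith
  have hk' : k < 2 := by
    by_contra! hk'
    nlinarith
  obtain rfl | rfl : k = 0 ∨ k = 1 := by omega
  all_goals simp

namespace IsReduced

variable {f : Tuple} {B C : ℤ → Bool}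

theorem B_eq (h : IsReduced f B C) {x y : ℤ} (k : ℤ) (hxy : x = y + (f.h0 + f.h1) * k) :
    B x = B y :=
  apply_eq_of_modEq h.perB (modEq_of_eq_add_mul k hxy)

theorem C_eq (h : IsReduced f B C) {x y : ℤ} (k : ℤ) (hxy : x = y + (f.h1 + f.h2) * k) :
    C x = C y :=
  apply_eq_of_modEq h.perC (modEq_of_eq_add_mul k hxy)

theorem sigmaLow (h : IsReduced f B C) (h1 : 0 < f.h1) (hq : 0 ≤ f.q0) (h0 : f.q0 < f.h0)
    (h2 : f.q0 < f.h2) :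
    IsReduced (sigmaLow f) (fun x => B (x - f.q0)) (fun x => C (f.q2 - 1 - x)) where
  perB x := h.B_eq 1 (by dsimp only [GMN.sigmaLow]; ring)
  perC x := h.C_eq (-1) (by dsimp only [GMN.sigmaLow]; ring)
  arc2 t ht ht' := by
    dsimp only [GMN.sigmaLow] at *
    calc B (t - f.q0) = B (-1 - (f.q0 - 1 - t)) := h.B_eq 0 (by ring)
      _ = C (t + f.q2) :=
        h.arcBC _ t (by omega) (by omega) ht (by omega) (modEq_of_eq_add_mul 0 (by ring))
      _ = C (f.q2 - 1 - (-1 - t)) := h.C_eq 0 (by ring)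
  arc3 t ht ht' := by
    dsimp only [GMN.sigmaLow] at *
    calc B (t + (f.q0 + f.q1 + f.h1) - f.q0) = B (-1 - (f.h0 - 1 - t) + f.q1) :=
          h.B_eq 1 (by ring)
      _ = C (t - f.q0 + f.h2) :=
        (h.arcCB _ _ (by omega) (by omega) (by omega) (by omega)
          (modEq_of_eq_add_mul (-1) (by ring))).symm
      _ = C (f.q2 - 1 - (-1 - t + (f.q0 + f.q2 + f.h1))) := h.C_eq 1 (by ring)
  arcBB s t hs hs' ht ht' hst := by
    dsimp only [GMN.sigmaLow] at *
    obtain rfl : t = s + f.h1 := by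
      rcases eq_or_eq_sub_of_modEq hst (by omega) (by omega) with hst | hst <;> omega
    calc B (-1 - s - f.q0) = B (-1 - (s + f.q0)) := h.B_eq 0 (by ring)
      _ = B (-1 - s + f.q1) :=
        h.arcBB _ _ (by omega) (by omega) hs (by omega) (modEq_of_eq_add_mul 0 (by ring))
      _ = B (-1 - (s + f.h1) + (f.q0 + f.q1 + f.h1) - f.q0) := h.B_eq 0 (by ring)
  arcBC s t hs hs' ht ht' hst := by
    dsimp only [GMN.sigmaLow] at *
    obtain rfl : t = f.h0 + f.h1 + f.h2 - 2 * f.q0 - 1 - s := by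
      rcases eq_or_eq_sub_of_modEq hst (by omega) (by omega) with hst | hst <;> omega
    calc B (-1 - s - f.q0) = B (f.h0 + f.h1 - 1 - s - f.q0) := h.B_eq (-1) (by ring)
      _ = C (-1 - (f.h0 + f.h1 - 1 - s - f.q0)) := h.arc2 _ (by omega) (by omega)
      _ = C (f.q2 - 1 - (f.h0 + f.h1 + f.h2 - 2 * f.q0 - 1 - s + (f.q0 + f.q2 + f.h1))) :=
        h.C_eq 1 (by ring)
  arcCB s t hs hs' ht ht' hst := by
    dsimp only [GMN.sigmaLow] at *
    obtain rfl : t = f.h1 - 1 - s := by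
      rcases eq_or_eq_sub_of_modEq hst (by omega) (by omega) with hst | hst <;> omega
    calc C (f.q2 - 1 - s) = C (-1 - s + f.q2) := h.C_eq 0 (by ring)
      _ = B (s + f.q1) := (h.arc3 s hs (by omega)).symm
      _ = B (-1 - (f.h1 - 1 - s) + (f.q0 + f.q1 + f.h1) - f.q0) := h.B_eq 0 (by ring)
  arcCC s t hs hs' ht ht' hst := by
    dsimp only [GMN.sigmaLow] at *
    obtain rfl : t = s - f.h1 := by
      rcases eq_or_eq_sub_of_modEq hst (by omega) (by omega) with hst | hst <;> omega
    calc C (f.q2 - 1 - s) = C (f.h1 + f.h2 - 1 - s + f.q2) := h.C_eq (-1) (by ring)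
      _ = C (f.h1 + f.h2 - 1 - s - f.q0) :=
        (h.arcCC _ _ (by omega) (by omega) (by omega) (by omega)
          (modEq_of_eq_add_mul 0 (by ring))).symm
      _ = C (f.q2 - 1 - (s - f.h1 + (f.q0 + f.q2 + f.h1))) := h.C_eq 1 (by ring)

theorem sigmaDesc (h : IsReduced f B C) (h1 : 0 < f.h1) (hh2 : 0 < f.h2) (h2 : f.h2 < f.q0)
    (h0 : f.q0 < f.h0) :
    IsReduced (sigmaDesc f) (fun x => B (x - f.q0)) (fun x => C (f.q2 - 1 - x)) where
  perB x := h.B_eq 1 (by dsimp only [GMN.sigmaDesc]; ring)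
  perC x := h.C_eq (-1) (by dsimp only [GMN.sigmaDesc]; ring)
  arc2 t ht ht' := by
    dsimp only [GMN.sigmaDesc] at *
    calc B (t - f.q0) = B (-1 - (f.q0 - 1 - t)) := h.B_eq 0 (by ring)
      _ = C (t + f.q2) :=
        h.arcBC _ t (by omega) (by omega) ht ht' (modEq_of_eq_add_mul 0 (by ring))
      _ = C (f.q2 - 1 - (-1 - t)) := h.C_eq 0 (by ring)
  arc3 t ht ht' := by
    dsimp only [GMN.sigmaDesc] at *
    calc B (t + (2 * f.q0 + f.q1 + f.h1 - f.h2) - f.q0)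
          = B (-1 - (f.h0 + f.h2 - f.q0 - 1 - t) + f.q1) := h.B_eq 1 (by ring)
      _ = C t :=
        (h.arcCB _ _ ht ht' (by omega) (by omega) (modEq_of_eq_add_mul (-1) (by ring))).symm
      _ = C (f.q2 - 1 - (-1 - t + f.q2)) := h.C_eq 0 (by ring)
  arcBB s t hs hs' ht ht' hst := by
    dsimp only [GMN.sigmaDesc] at *
    rcases eq_or_eq_sub_of_modEq hst (by omega) (by omega) with hs | hs
    · calc B (-1 - s - f.q0) = B (-1 - t) := h.B_eq (-1) (by rw [hs]; ring)
        _ = B (-1 - (t - f.q0 + f.h0 + f.h2) + f.q1) :=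
          h.arcBB _ _ ht (by omega) (by omega) (by omega) (modEq_of_eq_add_mul (-1) (by ring))
        _ = B (-1 - t + (2 * f.q0 + f.q1 + f.h1 - f.h2) - f.q0) := h.B_eq (-1) (by ring)
    · calc B (-1 - s - f.q0) = B (-1 - (s + f.q0)) := h.B_eq 0 (by ring)
        _ = B (-1 - s + f.q1) :=
          h.arcBB _ _ (by omega) (by omega) (by omega) (by omega) (modEq_of_eq_add_mul 0 (by ring))
        _ = B (-1 - t + (2 * f.q0 + f.q1 + f.h1 - f.h2) - f.q0) := h.B_eq 0 (by rw [hs]; ring)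
  arcBC s t hs hs' ht ht' hst := by
    dsimp only [GMN.sigmaDesc] at *
    obtain rfl : s = f.h1 + f.h0 - f.q0 - 1 - t := by
      rcases eq_or_eq_sub_of_modEq hst (by omega) (by omega) with hst | hst <;> omega
    calc B (-1 - (f.h1 + f.h0 - f.q0 - 1 - t) - f.q0) = B t := h.B_eq (-1) (by ring)
      _ = C (-1 - t) := h.arc2 t ht ht'
      _ = C (f.q2 - 1 - (t + f.q2)) := h.C_eq 0 (by ring)
  arcCB s t hs hs' ht ht' hst := by
    dsimp only [GMN.sigmaDesc] at *
    obtain rfl : t = f.h1 - f.h2 + f.q0 - 1 - s := by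
      rcases eq_or_eq_sub_of_modEq hst (by omega) (by omega) with hst | hst <;> omega
    calc C (f.q2 - 1 - s) = C (-1 - s + f.q2) := h.C_eq 0 (by ring)
      _ = B (s + f.q1) := (h.arc3 s hs hs').symm
      _ = B (-1 - (f.h1 - f.h2 + f.q0 - 1 - s) + (2 * f.q0 + f.q1 + f.h1 - f.h2) - f.q0) :=
        h.B_eq 0 (by ring)
  arcCC s t hs hs' ht ht' hst := by
    dsimp only [GMN.sigmaDesc] at *
    rcases eq_or_eq_sub_of_modEq hst (by omega) (by omega) with hst | hst <;> omega

end IsReduced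

theorem encard_colourings_le_of_isReduced {f g : Tuple} (f0 : 0 < f.h0) (f2 : 0 < f.h2)
    (g0 : 0 < g.h0) (g2 : 0 < g.h2) (a b : ℤ)
    (hg : ∀ B C, IsReduced f B C → IsReduced g (fun x => B (x - a)) (fun x => C (b - x))) :
    (colourings f).encard ≤ (colourings g).encard := by
  rw [encard_colourings_eq f0 f2, encard_colourings_eq g0 g2]
  refine Set.encard_le_encard_of_injOn (f := fun p => (fun x => p.1 (x - a), fun x => p.2 (b - x)))
    (fun p hp => hg p.1 p.2 hp) fun p _ r _ hpr =>
      Prod.ext (funext fun x => ?_) (funext fun x => ?_)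
  · simpa using congrFun (congrArg Prod.fst hpr) (x + a)
  · simpa using congrFun (congrArg Prod.snd hpr) (b - x)

theorem encard_colourings_le_sigma_of_low {f : Tuple} (hf : PreAdmissible f) (hq : f.q0 ≠ 0)
    (h0 : f.q0 < f.h0) (h2 : f.q0 < f.h2) :
    (colourings f).encard ≤ (colourings (sigma f)).encard := by
  obtain ⟨⟩ := hf
  rw [sigma_of_low hq h0 h2]
  refine le_trans ?_ (encard_colourings_le_reduce (sigmaLow f))
  refine encard_colourings_le_of_isReduced ‹_› ‹_› ?_ ?_ f.q0 (f.q2 - 1) fun B C h =>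
    h.sigmaLow ‹_› ‹_› h0 h2
  all_goals dsimp only [sigmaLow]; omega

theorem encard_colourings_le_sigma_of_desc {f : Tuple} (hf : PreAdmissible f) (h2 : f.h2 < f.q0)
    (h0 : f.q0 < f.h0) : (colourings f).encard ≤ (colourings (sigma f)).encard := by
  obtain ⟨⟩ := hf
  rw [sigma_of_desc (by omega) h2 h0]
  refine le_trans ?_ (encard_colourings_le_reduce (sigmaDesc f))
  refine encard_colourings_le_of_isReduced ‹_› ‹_› ?_ ?_ f.q0 (f.q2 - 1) fun B C h =>
    h.sigmaDesc ‹_› ‹_› h2 h0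
  all_goals dsimp only [sigmaDesc]; omega

theorem encard_colourings_le_sigma {f : Tuple} (hf : PreAdmissible f) :
    (colourings f).encard ≤ (colourings (sigma f)).encard := by
  by_cases hq : f.q0 = 0
  · rw [sigma_of_eq_zero hq]
  rcases hf.sigma_cases with ⟨h0, h2⟩ | ⟨h0, h2⟩ | ⟨h0, h2⟩ | ⟨h2, h0⟩
  · exact encard_colourings_le_sigma_of_low hf hq h0 h2
  · have q0_lt := hf.q0_lt
    have q0_psi3 : (psi3 f).q0 = f.h2 + f.h0 - f.q0 := by
      rw [psi3_eq_reduce]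
      exact Int.emod_eq_of_lt (by dsimp only [reflectQ]; omega) (by dsimp only [reflectQ]; omega)
    calc (colourings f).encard ≤ (colourings (psi3 f)).encard := encard_colourings_le_psi3 f
      _ ≤ (colourings (sigma (psi3 f))).encard :=
        encard_colourings_le_sigma_of_low hf.psi3 (by omega) (by dsimp only [psi3] at *; omega)
          (by dsimp only [psi3] at *; omega)
      _ ≤ (colourings (psi3 (sigma (psi3 f)))).encard := encard_colourings_le_psi3 _
      _ = (colourings (sigma f)).encard := by rw [sigma_psi3 hf, psi3_psi3 hf.sigma]
  · calc (colourings f).encard ≤ (colourings (psi2 f)).encard := encard_colourings_le_psi2 f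
      _ ≤ (colourings (sigma (psi2 f))).encard :=
        encard_colourings_le_sigma_of_desc hf.psi2 h0 h2
      _ ≤ (colourings (psi2 (sigma (psi2 f)))).encard := encard_colourings_le_psi2 _
      _ = (colourings (sigma f)).encard := by rw [sigma_psi2 hf]; rfl
  · exact encard_colourings_le_sigma_of_desc hf h2 h0

theorem Admissible.sigma {f : Tuple} (hf : Admissible f) : Admissible (sigma f) := by
  have pre := preAdmissible_iff.1 hf.preAdmissible.sigma
  refine ⟨pre.1, pre.2, (threeOrbits_iff_encard pre.1.1).2 ?_⟩
  rw [← (threeOrbits_iff_encard hf.1.1).1 hf.2.2]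
  refine le_antisymm ?_ (encard_colourings_le_sigma hf.preAdmissible)
  exact (encard_colourings_le_sigma hf.preAdmissible.sigma).trans_eq
    (by rw [sigma_sigma hf.preAdmissible])

/-! ### Minimality -/

theorem PreAdmissible.nu_le_nu_sigma_iff {f : Tuple} (hf : PreAdmissible f) :
    nu f ≤ nu (GMN.sigma f) ↔
      f.q0 = 0 ∨ min (min f.h0 f.h2) (min f.q0 (f.h0 + f.h2 - f.q0)) ≤ f.h1 := by
  by_cases hq : f.q0 = 0
  · simp [sigma_of_eq_zero hq, hq]
  · rw [hf.nu_sigma hq]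
    omega

theorem Admissible.forall_nu_le_iff {f : Tuple} (hf : Admissible f) (h01 : f.h0 ≤ f.h1)
    (h12 : f.h1 ≤ f.h2) :
    (∀ g, GEquiv f g → nu f ≤ nu g) ↔ nu f ≤ nu (GMN.sigma (GMN.psi1 (GMN.psi1 f))) := by
  constructor
  · intro h
    have hf2 := hf.psi1.psi1
    exact h _ (.trans _ _ _ (.rel _ _ ⟨hf, hf.psi1, .inl rfl⟩)
      (.trans _ _ _ (.rel _ _ ⟨hf.psi1, hf2, .inl rfl⟩)
        (.rel _ _ ⟨hf2, hf2.sigma, .inr (.inr (.inr rfl))⟩)))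
  · intro h g hfg
    refine (isLocalMin_iff.2 ⟨?_, ?_, h⟩).nu_le_of_gEquiv hfg
    · exact hf.preAdmissible.nu_le_nu_sigma (min_le_of_left_le h01)
    · rw [← nu_psi1 f]
      exact hf.preAdmissible.psi1.nu_le_nu_sigma (min_le_of_left_le h12)

theorem stmt_18_general {f : Tuple} (hf : Admissible f) (h01 : f.h0 ≤ f.h1) (h12 : f.h1 ≤ f.h2) :
    (∀ g, GEquiv f g → nu f ≤ nu g) ↔
      (f.q2 < f.h0 ∨ f.h1 + f.h2 - f.h0 < f.q2 ∨
        (f.h0 = f.h1 ∧ f.h0 < f.q2 ∧ f.q2 < f.h2)) := by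
  have pre := hf.preAdmissible
  rw [hf.forall_nu_le_iff h01 h12, ← nu_psi1, ← nu_psi1 (psi1 f),
    pre.psi1.psi1.nu_le_nu_sigma_iff]
  obtain ⟨⟩ := pre
  dsimp only [psi1]
  omega

/-- a canonical 6-tuple `(h₀,h₁,h₂;q₀,q₁,q₂)` is minimal iff
`q₂ < h₀`, or `q₂ > h₁+h₂−h₀`, or `h₀ = h₁` and `h₀ < q₂ < h₂`. -/
theorem stmt_18 (f : Tuple) (hf : Canonical f) :
    Minimal f ↔
      (f.q2 < f.h0 ∨ f.h1 + f.h2 - f.h0 < f.q2 ∨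
        (f.h0 = f.h1 ∧ f.h0 < f.q2 ∧ f.q2 < f.h2)) := by
  rw [Minimal, and_iff_right hf, stmt_18_general hf.1 hf.2.1.1 hf.2.1.2]

end GMN
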